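/- There exists a countable set D of excursions (lower semicontinuous functions h : [0,1] → [0,∞) with h(0) = 0) such that for every excursion h and every ε > 0, there is g ∈ D with d_Γ(h,g) + d_λ(h,g) < ε, where d_Γ is the Hausdorff distance between epigraphs in ℝ² and d_λ(h,g) = inf{ε > 0 : Leb{t : |h(t) − g(t)| > ε} < ε}. That is, the space of excursions equipped with the excursion metric d_ex = d_Γ + d_λ is separable. -/

import Mathlib

open MeasureTheory

/-- The epigraph `epi(h) = {(t, y) ∈ [0,1] × [0,∞) : y ≥ h(t)}` of `h : [0,1] → [0,∞)`,
viewed as a subset of `ℝ²`. -/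
def epigraph (h : unitInterval → ℝ) : Set (ℝ × ℝ) :=
  {p | ∃ t : unitInterval, (t : ℝ) = p.1 ∧ 0 ≤ p.2 ∧ h t ≤ p.2}

/-- The Ky Fan metric `d_λ(h, g) = inf {ε > 0 : Leb{t : |h(t) - g(t)| > ε} < ε}`
for convergence in Lebesgue measure. -/
noncomputable def kyFanDist (h g : unitInterval → ℝ) : ℝ :=
  sInf {ε : ℝ | 0 < ε ∧ volume {t : unitInterval | ε < |h t - g t|} < ENNReal.ofReal ε}

/-!
The Lipschitz envelopes `t ↦ inf_s (h s + K |t - s|)` of an excursion `h` are continuous excursions.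
A near-minimizer `s` in this infimum is close to `t` once `K` is large, uniformly in `t` because
every point of `[0,1]` is close to one of finitely many points, at which `h` is bounded. Hence the
epigraphs converge in Hausdorff distance, although `h` may be unbounded; by lower semicontinuity
the envelopes also converge pointwise, hence in measure. So continuous excursions are dense for the
excursion metric, which is at most twice the uniform distance on them, and `C([0,1], ℝ)` is
separable.
-/

open Filter Metric Set Topology
open scoped NNReal

section LipschitzEnvelope

variable {α : Type*} [PseudoMetricSpace α] {h : α → ℝ}

/-- The Lipschitz envelope (Pasch–Hausdorff regularization) of `h`: its largest `K`-Lipschitz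
minorant when `h` is bounded below; a real infimum unbounded below takes the junk value `0`. -/
noncomputable def lipschitzEnvelope (K : ℝ≥0) (h : α → ℝ) (x : α) : ℝ :=
  ⨅ y, (h y + K * dist x y)

theorem bddBelow_range_add_mul_dist (hh : BddBelow (range h)) (K : ℝ≥0) (x : α) :
    BddBelow (range fun y ↦ h y + K * dist x y) := by
  obtain ⟨a, ha⟩ := hh
  refine ⟨a, forall_mem_range.2 fun y ↦ ?_⟩
  have : a ≤ h y := ha (mem_range_self y)
  have : 0 ≤ K * dist x y := by positivity
  linarith

theorem lipschitzEnvelope_le_add (hh : BddBelow (range h)) (K : ℝ≥0) (x y : α) :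
    lipschitzEnvelope K h x ≤ h y + K * dist x y :=
  ciInf_le (bddBelow_range_add_mul_dist hh K x) y

theorem lipschitzEnvelope_le (hh : BddBelow (range h)) (K : ℝ≥0) (x : α) :
    lipschitzEnvelope K h x ≤ h x := by
  simpa only [dist_self, mul_zero, add_zero] using lipschitzEnvelope_le_add hh K x x

theorem lipschitzEnvelope_nonneg (hh : ∀ x, 0 ≤ h x) (K : ℝ≥0) (x : α) :
    0 ≤ lipschitzEnvelope K h x :=
  Real.iInf_nonneg fun y ↦ add_nonneg (hh y) (by positivity)

theorem lipschitzWith_lipschitzEnvelope (hh : BddBelow (range h)) (K : ℝ≥0) :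
    LipschitzWith K (lipschitzEnvelope K h) := by
  refine LipschitzWith.of_le_add_mul K fun x y ↦ ?_
  have : Nonempty α := ⟨x⟩
  rw [← sub_le_iff_le_add]
  refine le_ciInf fun z ↦ sub_le_iff_le_add.2 ?_
  calc lipschitzEnvelope K h x
      ≤ h z + K * dist x z := lipschitzEnvelope_le_add hh K x z
    _ ≤ h z + K * (dist x y + dist y z) := by gcongr; exact dist_triangle x y z
    _ = h z + K * dist y z + K * dist x y := by ring

theorem exists_dist_lt_le_lipschitzEnvelope_add {a δ : ℝ} {K : ℝ≥0} {x y : α} (ha : ∀ z, a ≤ h z)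
    (hδ : 0 < δ) (hxy : dist x y < δ) (hK : h y - a ≤ K * δ) :
    ∃ z, dist x z < δ ∧ h z ≤ lipschitzEnvelope K h x + δ := by
  have : Nonempty α := ⟨x⟩
  by_cases hy : h y ≤ lipschitzEnvelope K h x + δ
  · exact ⟨y, hxy, hy⟩
  obtain ⟨z, hz⟩ : ∃ z, h z + K * dist x z < lipschitzEnvelope K h x + δ :=
    exists_lt_of_ciInf_lt (lt_add_of_pos_right (lipschitzEnvelope K h x) hδ)
  have hKz : K * dist x z < K * δ := by linarith [ha z]
  refine ⟨z, lt_of_mul_lt_mul_left hKz K.coe_nonneg, ?_⟩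
  have : 0 ≤ K * dist x z := by positivity
  linarith

theorem tendsto_lipschitzEnvelope (hh : BddBelow (range h)) {x : α}
    (hx : LowerSemicontinuousAt h x) :
    Tendsto (fun K ↦ lipschitzEnvelope K h x) atTop (𝓝 (h x)) := by
  obtain ⟨a, ha⟩ := hh
  refine tendsto_order.2 ⟨fun b hb ↦ ?_, fun b hb ↦
    .of_forall fun K ↦ (lipschitzEnvelope_le ⟨a, ha⟩ K x).trans_lt hb⟩
  obtain ⟨c, hbc, hc⟩ := exists_between hb
  obtain ⟨r, hr, hball⟩ := Metric.eventually_nhds_iff.1 (hx c hc)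
  set δ := min r (c - b)
  have hδ : 0 < δ := lt_min hr (sub_pos.2 hbc)
  filter_upwards [eventually_ge_atTop ((h x - a) / δ).toNNReal] with K hK
  obtain ⟨z, hz, hhz⟩ := exists_dist_lt_le_lipschitzEnvelope_add (forall_mem_range.1 ha) hδ
    ((dist_self x).trans_lt hδ) ((div_le_iff₀ hδ).1 (Real.toNNReal_le_iff_le_coe.1 hK))
  have hcz : c < h z := hball ((dist_comm z x).trans_lt (hz.trans_le (min_le_left _ _)))
  have hδcb : δ ≤ c - b := min_le_right _ _
  linarith

theorem eventually_exists_dist_lt_le_lipschitzEnvelope_add (hα : TotallyBounded (univ : Set α))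
    (hh : BddBelow (range h)) {δ : ℝ} (hδ : 0 < δ) :
    ∀ᶠ K in atTop, ∀ x, ∃ y, dist x y < δ ∧ h y ≤ lipschitzEnvelope K h x + δ := by
  obtain ⟨a, ha⟩ := hh
  obtain ⟨T, hT, hcover⟩ := Metric.totallyBounded_iff.1 hα δ hδ
  obtain ⟨M, hM⟩ := (hT.image h).bddAbove
  filter_upwards [eventually_ge_atTop ((M - a) / δ).toNNReal] with K hK x
  obtain ⟨y, hy, hxy⟩ := mem_iUnion₂.1 (hcover (mem_univ x))
  refine exists_dist_lt_le_lipschitzEnvelope_add (forall_mem_range.1 ha) hδ hxy ?_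
  have : h y ≤ M := hM (mem_image_of_mem h hy)
  have : M - a ≤ K * δ := (div_le_iff₀ hδ).1 (Real.toNNReal_le_iff_le_coe.1 hK)
  linarith

end LipschitzEnvelope

section Epigraph

variable {f g : unitInterval → ℝ}

theorem exists_mem_epigraph_edist_le {r : ℝ≥0} (hfg : ∀ t, ∃ s, dist t s ≤ r ∧ g s ≤ f t + r) :
    ∀ p ∈ epigraph f, ∃ q ∈ epigraph g, edist p q ≤ r := by
  rintro ⟨_, y⟩ ⟨t, rfl, hy, hty⟩
  dsimp only at hy hty
  obtain ⟨s, hts, hs⟩ := hfg t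
  refine ⟨(s, y + r), ⟨s, rfl, add_nonneg hy r.coe_nonneg, hs.trans (add_le_add_left hty _)⟩, ?_⟩
  rw [edist_le_coe, ← NNReal.coe_le_coe, coe_nndist, Prod.dist_eq]
  refine max_le hts ?_
  simp only [dist_self_add_right, NNReal.norm_eq, le_refl]

theorem hausdorffEDist_epigraph_le {r : ℝ≥0} (hfg : ∀ t, ∃ s, dist t s ≤ r ∧ g s ≤ f t + r)
    (hgf : ∀ t, ∃ s, dist t s ≤ r ∧ f s ≤ g t + r) :
    hausdorffEDist (epigraph f) (epigraph g) ≤ r :=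
  hausdorffEDist_le_of_mem_edist (exists_mem_epigraph_edist_le hfg)
    (exists_mem_epigraph_edist_le hgf)

theorem hausdorffDist_epigraph_le {r : ℝ} (hr : 0 ≤ r)
    (hfg : ∀ t, ∃ s, dist t s ≤ r ∧ g s ≤ f t + r)
    (hgf : ∀ t, ∃ s, dist t s ≤ r ∧ f s ≤ g t + r) :
    hausdorffDist (epigraph f) (epigraph g) ≤ r := by
  lift r to ℝ≥0 using hr
  exact ENNReal.toReal_le_coe_of_le_coe (hausdorffEDist_epigraph_le hfg hgf)

theorem hausdorffDist_epigraph_le_of_forall_dist_le {r : ℝ} (hfg : ∀ t, dist (f t) (g t) ≤ r) :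
    hausdorffDist (epigraph f) (epigraph g) ≤ r := by
  have hr : 0 ≤ r := dist_nonneg.trans (hfg 0)
  refine hausdorffDist_epigraph_le hr (fun t ↦ ⟨t, by rwa [dist_self], ?_⟩)
    fun t ↦ ⟨t, by rwa [dist_self], ?_⟩
  all_goals linarith [abs_le.1 (hfg t)]

theorem hausdorffEDist_epigraph_ne_top (hf0 : f 0 = 0) (hf : ∀ t, 0 ≤ f t) (hg0 : g 0 = 0)
    (hg : ∀ t, 0 ≤ g t) : hausdorffEDist (epigraph f) (epigraph g) ≠ ⊤ := by
  have hdist (t : unitInterval) : dist t 0 ≤ (1 : ℝ≥0) :=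
    Real.dist_le_of_mem_Icc_01 t.2 (0 : unitInterval).2
  have hle : hausdorffEDist (epigraph f) (epigraph g) ≤ (1 : ℝ≥0) :=
    hausdorffEDist_epigraph_le (fun t ↦ ⟨0, hdist t, hg0.trans_le (add_nonneg (hf t) zero_le_one)⟩)
      fun t ↦ ⟨0, hdist t, hf0.trans_le (add_nonneg (hg t) zero_le_one)⟩
  exact ne_top_of_le_ne_top ENNReal.coe_ne_top hle

theorem tendsto_hausdorffDist_epigraph_lipschitzEnvelope (hf : BddBelow (range f)) :
    Tendsto (fun K ↦ hausdorffDist (epigraph f) (epigraph (lipschitzEnvelope K f))) atTop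
      (𝓝 0) := by
  refine tendsto_order.2 ⟨fun b hb ↦ .of_forall fun K ↦ hb.trans_le hausdorffDist_nonneg,
    fun b hb ↦ ?_⟩
  obtain ⟨δ, hδ, hδb⟩ := exists_between hb
  filter_upwards [eventually_exists_dist_lt_le_lipschitzEnvelope_add isCompact_univ.totallyBounded
    hf hδ] with K hK
  refine (hausdorffDist_epigraph_le hδ.le (fun t ↦ ⟨t, ?_, ?_⟩) fun t ↦ ?_).trans_lt hδb
  · rw [dist_self]
    exact hδ.le
  · linarith [lipschitzEnvelope_le hf K t]
  · obtain ⟨s, hts, hs⟩ := hK t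
    exact ⟨s, hts.le, hs⟩

end Epigraph

section KyFan

variable {f g h : unitInterval → ℝ}

theorem kyFanDist_nonneg (f g : unitInterval → ℝ) : 0 ≤ kyFanDist f g :=
  Real.sInf_nonneg fun _ hε ↦ hε.1.le

theorem kyFanDist_le {ε : ℝ} (hε : 0 < ε)
    (hfg : volume {t : unitInterval | ε < |f t - g t|} < ENNReal.ofReal ε) : kyFanDist f g ≤ ε :=
  csInf_le ⟨0, fun _ hx ↦ hx.1.le⟩ ⟨hε, hfg⟩

theorem kyFanDist_le_of_forall_dist_le {r : ℝ} (hfg : ∀ t, dist (f t) (g t) ≤ r) :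
    kyFanDist f g ≤ r := by
  refine le_of_forall_gt_imp_ge_of_dense fun ε hε ↦ ?_
  have hε0 : 0 < ε := (dist_nonneg.trans (hfg 0)).trans_lt hε
  have hempty : {t : unitInterval | ε < |f t - g t|} = ∅ :=
    eq_empty_of_forall_notMem fun t ht ↦ ((hfg t).trans_lt hε).not_gt ht
  refine kyFanDist_le hε0 ?_
  rwa [hempty, measure_empty, ENNReal.ofReal_pos]

theorem exists_volume_lt_of_kyFanDist_lt {r : ℝ} (hfg : kyFanDist f g < r) :
    ∃ ε < r, 0 < ε ∧ volume {t : unitInterval | ε < |f t - g t|} < ENNReal.ofReal ε := by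
  have hne : {ε : ℝ | 0 < ε ∧
      volume {t : unitInterval | ε < |f t - g t|} < ENNReal.ofReal ε}.Nonempty :=
    ⟨2, two_pos, prob_le_one.trans_lt (by norm_num)⟩
  obtain ⟨ε, hε, hεr⟩ := exists_lt_of_csInf_lt hne hfg
  exact ⟨ε, hεr, hε⟩

theorem volume_add_lt_abs_sub_lt_ofReal_add {a b : ℝ} (ha : 0 ≤ a) (hb : 0 ≤ b)
    (hfg : volume {t : unitInterval | a < |f t - g t|} < ENNReal.ofReal a)
    (hgh : volume {t : unitInterval | b < |g t - h t|} < ENNReal.ofReal b) :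
    volume {t : unitInterval | a + b < |f t - h t|} < ENNReal.ofReal (a + b) := by
  have hsub : {t | a + b < |f t - h t|} ⊆ {t | a < |f t - g t|} ∪ {t | b < |g t - h t|} := by
    refine fun t (ht : a + b < |f t - h t|) ↦ lt_or_lt_of_add_lt_add (ht.trans_le ?_)
    exact abs_sub_le (f t) (g t) (h t)
  rw [ENNReal.ofReal_add ha hb]
  exact (measure_mono hsub).trans_lt ((measure_union_le _ _).trans_lt (ENNReal.add_lt_add hfg hgh))

theorem kyFanDist_triangle (f g h : unitInterval → ℝ) :
    kyFanDist f h ≤ kyFanDist f g + kyFanDist g h := by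
  refine le_of_forall_pos_lt_add fun η hη ↦ ?_
  obtain ⟨a, ha_lt, ha, hfg⟩ := exists_volume_lt_of_kyFanDist_lt
    (lt_add_of_pos_right (kyFanDist f g) (half_pos hη))
  obtain ⟨b, hb_lt, hb, hgh⟩ := exists_volume_lt_of_kyFanDist_lt
    (lt_add_of_pos_right (kyFanDist g h) (half_pos hη))
  calc kyFanDist f h
      ≤ a + b := kyFanDist_le (add_pos ha hb)
        (volume_add_lt_abs_sub_lt_ofReal_add ha.le hb.le hfg hgh)
    _ < kyFanDist f g + η / 2 + (kyFanDist g h + η / 2) := add_lt_add ha_lt hb_lt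
    _ = kyFanDist f g + kyFanDist g h + η := by ring

theorem tendsto_kyFanDist_of_tendstoInMeasure {ι : Type*} {l : Filter ι}
    {F : ι → unitInterval → ℝ} (hF : TendstoInMeasure volume F l f) :
    Tendsto (fun i ↦ kyFanDist f (F i)) l (𝓝 0) := by
  refine tendsto_order.2 ⟨fun b hb ↦ .of_forall fun i ↦ hb.trans_le (kyFanDist_nonneg _ _),
    fun b hb ↦ ?_⟩
  obtain ⟨ε, hε, hεb⟩ := exists_between hb
  filter_upwards [(tendstoInMeasure_iff_dist.1 hF ε hε).eventually_lt_const
    (ENNReal.ofReal_pos.2 hε)] with i hi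
  have hsub : {t | ε < |f t - F i t|} ⊆ {t | ε ≤ dist (F i t) (f t)} :=
    fun t (ht : ε < |f t - F i t|) ↦ ht.le.trans_eq (dist_comm (f t) (F i t))
  exact (kyFanDist_le hε ((measure_mono hsub).trans_lt hi)).trans_lt hεb

theorem tendsto_kyFanDist_lipschitzEnvelope (hf : LowerSemicontinuous f)
    (hf_bdd : BddBelow (range f)) :
    Tendsto (fun n : ℕ ↦ kyFanDist f (lipschitzEnvelope n f)) atTop (𝓝 0) := by
  refine tendsto_kyFanDist_of_tendstoInMeasure (tendstoInMeasure_of_tendsto_ae (fun n ↦ ?_) ?_)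
  · exact (lipschitzWith_lipschitzEnvelope hf_bdd n).continuous.aestronglyMeasurable
  · exact .of_forall fun t ↦
      (tendsto_lipschitzEnvelope hf_bdd (hf t)).comp tendsto_natCast_atTop_atTop

end KyFan

/-- The excursion metric `d_ex = d_Γ + d_λ`. The junk value `0` of `Metric.hausdorffDist` at
infinite distance does not occur between excursions, whose epigraphs both contain `{0} × [0,∞)`. -/
noncomputable def excursionDist (f g : unitInterval → ℝ) : ℝ :=
  hausdorffDist (epigraph f) (epigraph g) + kyFanDist f g

/-- The excursions that are continuous, bundled as elements of `C([0,1], ℝ)` so that they carry the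
uniform distance. -/
def continuousExcursions : Set C(unitInterval, ℝ) :=
  {f | f 0 = 0 ∧ ∀ t, 0 ≤ f t}

theorem excursionDist_triangle {f g : unitInterval → ℝ} (hf0 : f 0 = 0) (hf : ∀ t, 0 ≤ f t)
    (hg0 : g 0 = 0) (hg : ∀ t, 0 ≤ g t) (h : unitInterval → ℝ) :
    excursionDist f h ≤ excursionDist f g + excursionDist g h := by
  have hΓ : hausdorffDist (epigraph f) (epigraph h) ≤
      hausdorffDist (epigraph f) (epigraph g) + hausdorffDist (epigraph g) (epigraph h) :=
    hausdorffDist_triangle (hausdorffEDist_epigraph_ne_top hf0 hf hg0 hg)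
  unfold excursionDist
  linarith [kyFanDist_triangle f g h]

theorem excursionDist_le_two_mul_dist (f g : C(unitInterval, ℝ)) :
    excursionDist f g ≤ 2 * dist f g := by
  have hfg (t : unitInterval) : dist (f t) (g t) ≤ dist f g := ContinuousMap.dist_apply_le_dist t
  rw [two_mul]
  exact add_le_add (hausdorffDist_epigraph_le_of_forall_dist_le hfg)
    (kyFanDist_le_of_forall_dist_le hfg)

theorem exists_continuousExcursion_excursionDist_lt {h : unitInterval → ℝ}
    (hh : LowerSemicontinuous h) (h_zero : h 0 = 0) (h_nonneg : ∀ t, 0 ≤ h t) {ε : ℝ}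
    (hε : 0 < ε) : ∃ f ∈ continuousExcursions, excursionDist h f < ε := by
  have hbdd : BddBelow (range h) := ⟨0, forall_mem_range.2 h_nonneg⟩
  have hlim : Tendsto (fun n : ℕ ↦ excursionDist h (lipschitzEnvelope n h)) atTop (𝓝 0) := by
    simpa only [add_zero, excursionDist, Function.comp_def] using
      ((tendsto_hausdorffDist_epigraph_lipschitzEnvelope hbdd).comp tendsto_natCast_atTop_atTop).add
        (tendsto_kyFanDist_lipschitzEnvelope hh hbdd)
  obtain ⟨n, hn⟩ := (hlim.eventually_lt_const hε).exists
  have h_env_nonneg : ∀ t, 0 ≤ lipschitzEnvelope n h t := lipschitzEnvelope_nonneg h_nonneg n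
  exact ⟨⟨lipschitzEnvelope n h, (lipschitzWith_lipschitzEnvelope hbdd n).continuous⟩,
    ⟨((lipschitzEnvelope_le hbdd n 0).trans_eq h_zero).antisymm (h_env_nonneg 0), h_env_nonneg⟩, hn⟩

/-- The space of excursions (lower semicontinuous `h : [0,1] → [0,∞)` with
`h(0) = 0`), equipped with the excursion metric `d_ex = d_Γ + d_λ`, is separable: there is a
countable set `D` of excursions such that every excursion is within `ε` of some member of `D`
in `d_ex`, for every `ε > 0`. -/
theorem excursions_separable :
    ∃ D : Set (unitInterval → ℝ), D.Countable ∧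
      (∀ g ∈ D, LowerSemicontinuous g ∧ g 0 = 0 ∧ ∀ t, 0 ≤ g t) ∧
      ∀ h : unitInterval → ℝ, LowerSemicontinuous h → h 0 = 0 → (∀ t, 0 ≤ h t) →
        ∀ ε : ℝ, 0 < ε → ∃ g ∈ D,
          Metric.hausdorffDist (epigraph h) (epigraph g) + kyFanDist h g < ε := by
  obtain ⟨C, hC, hC_countable, hC_dense⟩ :=
    (TopologicalSpace.IsSeparable.of_separableSpace
      continuousExcursions).exists_countable_dense_subset
  refine ⟨DFunLike.coe '' C, hC_countable.image _, ?_, fun h hh h_zero h_nonneg ε hε ↦ ?_⟩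
  · rintro _ ⟨f, hf, rfl⟩
    exact ⟨f.continuous.lowerSemicontinuous, hC hf⟩
  obtain ⟨f, hf, hhf⟩ :=
    exists_continuousExcursion_excursionDist_lt hh h_zero h_nonneg (half_pos hε)
  obtain ⟨g, hg, hfg⟩ := Metric.mem_closure_iff.1 (hC_dense hf) (ε / 4) (by positivity)
  refine ⟨g, mem_image_of_mem _ hg, ?_⟩
  calc excursionDist h g
      ≤ excursionDist h f + excursionDist f g := excursionDist_triangle h_zero h_nonneg hf.1 hf.2 g
    _ ≤ excursionDist h f + 2 * dist f g := by gcongr; exact excursionDist_le_two_mul_dist f g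
    _ < ε := by linarith
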